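/- Let G be a finitely generated virtually free group and let A be a finite subgroup of G. The following are equivalent: (1) A is a maximal finite subgroup of G, i.e. A is maximal with respect to inclusion among finite subgroups of G; (2) for every element g ∈ G \ A of finite order, there exists a ∈ A such that the element g·a has infinite order. -/

import Mathlib

open FirstOrder Language

/-- Function symbols of the first-order language of groups:
a binary multiplication, a unary inverse and a constant for the identity. -/
inductive GroupFunc : ℕ → Type
  | mul : GroupFunc 2
  | inv : GroupFunc 1
  | one : GroupFunc 0

/-- The first-order language of groups. -/
def groupLang : FirstOrder.Language :=
  { Functions := GroupFunc
    Relations := fun _ => Empty }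

/-- Every group is a structure for the language of groups in the natural way. -/
instance groupLangStructure (G : Type*) [Group G] : groupLang.Structure G where
  funMap {n} f v :=
    match f with
    | .mul => v 0 * v 1
    | .inv => (v 0)⁻¹
    | .one => 1
  RelMap {n} r _ := r.elim

/-- Existential formulas: iterated existential quantifications of a
quantifier-free formula. -/
inductive IsExistentialQF {α : Type*} : ∀ {n : ℕ}, groupLang.BoundedFormula α n → Prop
  | of_isQF {n : ℕ} {φ : groupLang.BoundedFormula α n} (h : φ.IsQF) : IsExistentialQF φ
  | ex {n : ℕ} {φ : groupLang.BoundedFormula α (n + 1)} (h : IsExistentialQF φ) :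
      IsExistentialQF φ.ex

/-- Universal formulas: iterated universal quantifications of a
quantifier-free formula. -/
inductive IsUniversalQF {α : Type*} : ∀ {n : ℕ}, groupLang.BoundedFormula α n → Prop
  | of_isQF {n : ℕ} {φ : groupLang.BoundedFormula α n} (h : φ.IsQF) : IsUniversalQF φ
  | all {n : ℕ} {φ : groupLang.BoundedFormula α (n + 1)} (h : IsUniversalQF φ) :
      IsUniversalQF φ.all

/-- ∀∃-formulas: iterated universal quantifications of an existential formula. -/
inductive IsAE {α : Type*} : ∀ {n : ℕ}, groupLang.BoundedFormula α n → Prop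
  | of_existential {n : ℕ} {φ : groupLang.BoundedFormula α n} (h : IsExistentialQF φ) : IsAE φ
  | all {n : ℕ} {φ : groupLang.BoundedFormula α (n + 1)} (h : IsAE φ) : IsAE φ.all

/-- A group is virtually free if it has a free subgroup of finite index. -/
def VirtuallyFree (G : Type*) [Group G] : Prop :=
  ∃ H : Subgroup G, H.FiniteIndex ∧ Nonempty (IsFreeGroup H)

/-- A group is co-Hopfian if every injective endomorphism is surjective. -/
def CoHopfian (G : Type*) [Group G] : Prop :=
  ∀ φ : G →* G, Function.Injective φ → Function.Surjective φ

/-- Two homomorphisms `φ, φ' : G → G'` are equivalent if they coincide up to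
conjugation on every finite subgroup of `G`. -/
def HomEquiv {G G' : Type*} [Group G] [Group G'] (φ φ' : G →* G') : Prop :=
  ∀ H : Subgroup G, (H : Set G).Finite →
    ∃ g' : G', ∀ h ∈ H, φ' h = g' * φ h * g'⁻¹

/-- Two groups are ∀∃-equivalent if they satisfy the same ∀∃-sentences. -/
def AEEquivalent (G : Type*) (G' : Type*) [Group G] [Group G'] : Prop :=
  ∀ φ : groupLang.Sentence, IsAE φ → (G ⊨ φ ↔ G' ⊨ φ)

/-- Two groups are ∃-equivalent if they satisfy the same existential sentences. -/
def ExistentiallyEquivalent (G : Type*) (G' : Type*) [Group G] [Group G'] : Prop :=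
  ∀ φ : groupLang.Sentence, IsExistentialQF φ → (G ⊨ φ ↔ G' ⊨ φ)

/-- An endomorphism is rigid-testing: `G` is rigid if every endomorphism
equivalent to the identity is an automorphism. -/
def Rigid (G : Type*) [Group G] : Prop :=
  ∀ φ : G →* G, HomEquiv φ (MonoidHom.id G) → Function.Bijective φ

/-- `Out G` is finite, expressed as: the inner automorphisms form a finite index
subgroup of `Aut G`. -/
def OutFinite (G : Type*) [Group G] : Prop :=
  (MulAut.conj : G →* MulAut G).range.FiniteIndex

/-- Iterated composition of an endomorphism. -/
def homPow {G : Type*} [Group G] (φ : G →* G) : ℕ → (G →* G)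
  | 0 => MonoidHom.id G
  | n + 1 => φ.comp (homPow φ n)

/-- An endomorphism `φ` of `G` is class-permuting if some positive power of `φ`
is equivalent to the identity of `G`. -/
def ClassPermuting {G : Type*} [Group G] (φ : G →* G) : Prop :=
  ∃ n : ℕ, 1 ≤ n ∧ HomEquiv (homPow φ n) (MonoidHom.id G)

/-- A maximal finite subgroup: a finite subgroup maximal with respect to
inclusion among finite subgroups. -/
def MaximalFiniteSubgroup {G : Type*} [Group G] (A : Subgroup G) : Prop :=
  (A : Set G).Finite ∧ ∀ B : Subgroup G, (B : Set G).Finite → A ≤ B → A = B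

/-- Two subgroups are conjugate. -/
def SubgroupConj {G : Type*} [Group G] (A B : Subgroup G) : Prop :=
  ∃ g : G, B = A.map (MulAut.conj g).toMonoidHom

/-- A group is strongly co-Hopfian if there is a finite subset `F` of
`G \ {1}` such that every endomorphism whose kernel misses `F` is an
automorphism. -/
def StronglyCoHopfian (G : Type*) [Group G] : Prop :=
  ∃ F : Finset G, (1 : G) ∉ F ∧
    ∀ φ : G →* G, (∀ f ∈ F, φ f ≠ 1) → Function.Bijective φ

/-- A group is finitely presented. -/
def GroupFinitelyPresented (G : Type*) [Group G] : Prop :=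
  ∃ (n : ℕ) (rels : Finset (FreeGroup (Fin n))),
    Nonempty (PresentedGroup (rels : Set (FreeGroup (Fin n))) ≃* G)

/-!
If every `g * a` has finite order, then all pairwise products of elements of `B = A ∪ {g}` have
finite order, and it suffices to see that a virtually free group `K` generated by such a finite
set `B` is finite.

An infinite such `K` has more than one end, because in the Cayley tree of a free group a single
edge cuts off the reduced words that start with a given letter. Weigh a cut by the number of pairs
`(x, x * g)` that it separates, summed over all `g` with small positive coefficients. By strict
submodularity of this weight, the lightest among the cuts of `K` with minimal edge boundary are
pairwise nested: they are the half-trees of a tree on which `K` acts with finite edge stabilizers.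
As in Serre's lemma on elliptic generators, the condition on products forces a global fixed point
of `K`. The translates of a half-tree next to it are equal or disjoint, so its stabilizer, which
is finite, acts transitively on it. But cuts are infinite.
-/

open scoped Pointwise

section NestedSystem

variable {G X : Type*} [Group G] [MulAction G X]

theorem isOfFinOrder_of_mul_self {M : Type*} [Monoid M] {a : M} (h : IsOfFinOrder (a * a)) :
    IsOfFinOrder a :=
  .of_pow (pow_two a ▸ h) two_ne_zero

theorem smul_set_eq_of_subset {g : G} (hg : IsOfFinOrder g) {E : Set X} (h : g • E ⊆ E) :
    g • E = E := by
  obtain ⟨n, hn, hgn⟩ := hg.exists_pow_eq_one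
  have hanti : Antitone fun k : ℕ => g ^ k • E := by
    simpa only [smul_iterate] using
      Monotone.antitone_iterate_of_map_le (f := (g • · : Set X → Set X))
        (fun _ _ => Set.smul_set_mono) h
  refine h.antisymm ?_
  simpa [hgn] using hanti (Nat.one_le_iff_ne_zero.2 hn.ne')

theorem smul_set_eq_of_superset {g : G} (hg : IsOfFinOrder g) {E : Set X} (h : E ⊆ g • E) :
    g • E = E := by
  have hinv : g⁻¹ • E ⊆ E := by rwa [Set.smul_set_subset_iff_subset_inv_smul_set, inv_inv]
  exact (inv_smul_eq_iff.1 (smul_set_eq_of_subset hg.inv hinv)).symm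

-- In a tree, disjoint fixed-point sets of `a` and `b` would make `b * a` hyperbolic.
theorem eq_compl_of_smul_subset_compl {a b : G} (hba : IsOfFinOrder (b * a)) {E F : Set X}
    (ha : a • E ⊆ Eᶜ) (hb : b • F ⊆ Fᶜ) (hEF : Eᶜ ⊆ F) :
    F = Eᶜ ∧ a • E = Eᶜ ∧ b • E = Eᶜ := by
  have hFE : Fᶜ ⊆ E := Set.compl_subset_comm.1 hEF
  have hle : (b * a) • E ⊆ b • F := by
    rw [mul_smul]
    exact Set.smul_set_mono (ha.trans hEF)
  have hfix : (b * a) • E = E := smul_set_eq_of_subset hba (hle.trans (hb.trans hFE))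
  have hbF : b • F = E := (hb.trans hFE).antisymm (hfix ▸ hle)
  have hFE' : Fᶜ = E := hFE.antisymm (hbF ▸ hb)
  have hF : F = Eᶜ := by rw [← hFE', _root_.compl_compl]
  refine ⟨hF, ?_, ?_⟩
  · rw [← hF, ← smul_left_cancel_iff b, ← mul_smul, hfix, hbF]
  · calc b • E = (b • F)ᶜ := by rw [← Set.smul_set_compl, hFE']
      _ = Eᶜ := by rw [hbF]

theorem isBlock_of_smul_eq_or_eq_compl {B : Set G} {E : Set X}
    (hgen : Subgroup.closure B = ⊤) (h : ∀ b ∈ B, b • E = E ∨ b • E = Eᶜ) :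
    MulAction.IsBlock G E := by
  suffices hG : ∀ g : G, g • E = E ∨ g • E = Eᶜ by
    refine MulAction.isBlock_iff_smul_eq_or_disjoint.2 fun g => (hG g).imp_right fun hg => ?_
    exact hg ▸ disjoint_compl_left
  intro g
  have hg : g ∈ Subgroup.closure B := hgen ▸ Subgroup.mem_top g
  induction hg using Subgroup.closure_induction with
  | mem b hb => exact h b hb
  | one => exact .inl (one_smul G E)
  | mul a b _ _ ha hb =>
    rcases ha with ha | ha <;> rcases hb with hb | hb <;>
      simp [mul_smul, ha, hb, Set.smul_set_compl]
  | inv a _ ha =>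
    rcases ha with ha | ha
    · exact .inl (inv_smul_eq_iff.2 ha.symm)
    · exact .inr (inv_smul_eq_iff.2 (by rw [Set.smul_set_compl, ha, _root_.compl_compl]))

/-- A nested system of cuts: an invariant family of subsets of a `G`-set, closed under complements,
in which no two members cross. Such a family is the set of half-trees of a `G`-tree. -/
structure IsNestedSystem (G : Type*) {X : Type*} [Group G] [MulAction G X]
    (C : Set (Set X)) : Prop where
  smul_mem : ∀ (g : G) {E : Set X}, E ∈ C → g • E ∈ C
  compl_mem : ∀ {E : Set X}, E ∈ C → Eᶜ ∈ C
  nested : ∀ {E F : Set X}, E ∈ C → F ∈ C → E ⊆ F ∨ F ⊆ E ∨ E ⊆ Fᶜ ∨ Fᶜ ⊆ E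

/-- The members of a family `C` of half-trees that some element of `B` moves off themselves, that
is, the half-trees missing the fixed points of some element of `B`. -/
def displaced (C : Set (Set X)) (B : Set G) : Set (Set X) :=
  {E ∈ C | ∃ b ∈ B, b • E ⊆ Eᶜ}

namespace IsNestedSystem

variable {C : Set (Set X)} {B : Set G} {E F : Set X}

theorem smul_eq_or_subset_compl (hC : IsNestedSystem G C) {g : G} (hg : IsOfFinOrder g)
    (hE : E ∈ C) : g • E = E ∨ g • E ⊆ Eᶜ ∨ g • Eᶜ ⊆ E := by
  rcases hC.nested (hC.smul_mem g hE) hE with h | h | h | h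
  · exact .inl (smul_set_eq_of_subset hg h)
  · exact .inl (smul_set_eq_of_superset hg h)
  · exact .inr (.inl h)
  · rw [Set.smul_set_compl]
    exact .inr (.inr (Set.compl_subset_comm.1 h))

theorem smul_eq_or_eq_compl_of_inversion (hC : IsNestedSystem G C)
    (hB : ∀ a ∈ B, ∀ b ∈ B, IsOfFinOrder (a * b)) (hE : E ∈ C) {b : G} (hb : b ∈ B)
    (hbE : b • E = Eᶜ) {a : G} (ha : a ∈ B) : a • E = E ∨ a • E = Eᶜ := by
  have ha' : IsOfFinOrder a := isOfFinOrder_of_mul_self (hB a ha a ha)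
  rcases hC.smul_eq_or_subset_compl ha' hE with h | h | h
  · exact .inl h
  · have hbE' : b • Eᶜ ⊆ Eᶜᶜ := by rw [Set.smul_set_compl, hbE]
    exact .inr (eq_compl_of_smul_subset_compl (hB b hb a ha) h hbE' subset_rfl).2.1
  · exact .inr (eq_compl_of_smul_subset_compl (hB a ha b hb) hbE.subset
      (by rwa [_root_.compl_compl]) subset_rfl).2.2

theorem not_compl_subset_of_mem_displaced (hC : IsNestedSystem G C)
    (hB : ∀ a ∈ B, ∀ b ∈ B, IsOfFinOrder (a * b))
    (hmove : ∀ E ∈ C, ∃ b ∈ B, b • E ≠ E ∧ b • E ≠ Eᶜ)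
    (hE : E ∈ displaced C B) (hF : F ∈ displaced C B) : ¬ Eᶜ ⊆ F := by
  obtain ⟨hEC, a, ha, haE⟩ := hE
  obtain ⟨-, b, hb, hbF⟩ := hF
  intro hEF
  have haE' := (eq_compl_of_smul_subset_compl (hB b hb a ha) haE hbF hEF).2.1
  obtain ⟨c, hc, hcE, hcE'⟩ := hmove E hEC
  exact (hC.smul_eq_or_eq_compl_of_inversion hB hEC ha haE' hc).elim hcE hcE'

theorem mem_or_compl_mem_displaced (hC : IsNestedSystem G C) (hB : ∀ b ∈ B, IsOfFinOrder b)
    (hmove : ∀ E ∈ C, ∃ b ∈ B, b • E ≠ E) (hE : E ∈ C) :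
    E ∈ displaced C B ∨ Eᶜ ∈ displaced C B := by
  obtain ⟨b, hb, hbE⟩ := hmove E hE
  rcases hC.smul_eq_or_subset_compl (hB b hb) hE with h | h | h
  · exact absurd h hbE
  · exact .inl ⟨hE, b, hb, h⟩
  · exact .inr ⟨hC.compl_mem hE, b, hb, by rwa [_root_.compl_compl]⟩

theorem smul_mem_displaced (hC : IsNestedSystem G C)
    (hB : ∀ a ∈ B, ∀ b ∈ B, IsOfFinOrder (a * b)) (hgen : Subgroup.closure B = ⊤)
    (hmove : ∀ E ∈ C, ∃ b ∈ B, b • E ≠ E ∧ b • E ≠ Eᶜ) (g : G) (hE : E ∈ displaced C B) :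
    g • E ∈ displaced C B := by
  have hB' : ∀ b ∈ B, IsOfFinOrder b := fun b hb =>
    isOfFinOrder_of_mul_self (hB b hb b hb)
  have hmove' : ∀ E ∈ C, ∃ b ∈ B, b • E ≠ E := fun E hE =>
    (hmove E hE).imp fun _ h => ⟨h.1, h.2.1⟩
  have hcompl : ∀ {E}, E ∈ displaced C B → Eᶜ ∉ displaced C B := fun hE hE' =>
    hC.not_compl_subset_of_mem_displaced hB hmove hE hE' subset_rfl
  have hg : g ∈ Subgroup.closure B := hgen ▸ Subgroup.mem_top g
  induction hg using Subgroup.closure_induction generalizing E with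
  | mem b hb =>
    rcases hC.smul_eq_or_subset_compl (hB' b hb) hE.1 with h | h | h
    · rwa [h]
    · exact ⟨hC.smul_mem b hE.1, b, hb, by
        rw [← Set.smul_set_compl]
        exact Set.smul_set_mono h⟩
    · exact absurd ⟨hC.compl_mem hE.1, b, hb, by rwa [_root_.compl_compl]⟩ (hcompl hE)
  | one => rwa [one_smul]
  | mul a b _ _ ha hb => exact mul_smul a b E ▸ ha (hb hE)
  | inv a _ ha =>
    refine (hC.mem_or_compl_mem_displaced hB' hmove' (hC.smul_mem a⁻¹ hE.1)).resolve_right ?_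
    intro h
    refine hcompl hE ?_
    simpa only [Set.smul_set_compl, smul_inv_smul] using ha h

theorem exists_maximal_displaced (hC : IsNestedSystem G C)
    (hsep : ∀ x y : X, {E ∈ C | x ∈ E ∧ y ∉ E}.Finite) (hB : ∀ b ∈ B, IsOfFinOrder b)
    (hBfin : B.Finite) (hmove : ∀ E ∈ C, ∃ b ∈ B, b • E ≠ E) (hne : C.Nonempty) (hempty : ∅ ∉ C) :
    ∃ E, Maximal (· ∈ displaced C B) E := by
  obtain ⟨E, hE⟩ : (displaced C B).Nonempty := by
    obtain ⟨E, hE⟩ := hne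
    exact (hC.mem_or_compl_mem_displaced hB hmove hE).elim (⟨_, ·⟩) (⟨_, ·⟩)
  obtain ⟨x, hx⟩ := Set.nonempty_iff_ne_empty.2 (ne_of_mem_of_not_mem hE.1 hempty)
  have hfin : {F ∈ displaced C B | x ∈ F}.Finite := by
    refine (hBfin.biUnion fun b _ => hsep x (b • x)).subset ?_
    rintro F ⟨⟨hF, b, hb, hbF⟩, hxF⟩
    exact Set.mem_biUnion hb ⟨hF, hxF, hbF (Set.smul_mem_smul_set hxF)⟩
  obtain ⟨M, -, hM⟩ := hfin.exists_le_maximal ⟨hE, hx⟩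
  exact ⟨M, hM.prop.1, fun F hF hMF => hM.le_of_ge ⟨hF, hMF hM.prop.2⟩ hMF⟩

theorem isBlock_of_maximal_displaced (hC : IsNestedSystem G C)
    (hB : ∀ a ∈ B, ∀ b ∈ B, IsOfFinOrder (a * b)) (hgen : Subgroup.closure B = ⊤)
    (hmove : ∀ E ∈ C, ∃ b ∈ B, b • E ≠ E ∧ b • E ≠ Eᶜ) (hE : Maximal (· ∈ displaced C B) E) :
    MulAction.IsBlock G E := by
  have hsmul (g : G) : g • E ∈ displaced C B :=
    hC.smul_mem_displaced hB hgen hmove g hE.prop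
  refine MulAction.isBlock_iff_smul_eq_or_disjoint.2 fun g => ?_
  rcases hC.nested (hsmul g).1 hE.prop.1 with h | h | h | h
  · have h' : E ⊆ g⁻¹ • E := Set.smul_set_subset_iff_subset_inv_smul_set.1 h
    exact .inl (inv_smul_eq_iff.1 (hE.eq_of_ge (hsmul g⁻¹) h')).symm
  · exact .inl (hE.eq_of_ge (hsmul g) h)
  · exact .inr (Set.disjoint_left.2 h)
  · exact absurd h (hC.not_compl_subset_of_mem_displaced hB hmove hE.prop (hsmul g))

theorem exists_isBlock (hC : IsNestedSystem G C)
    (hsep : ∀ x y : X, {E ∈ C | x ∈ E ∧ y ∉ E}.Finite) (hne : C.Nonempty) (hempty : ∅ ∉ C)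
    (hBfin : B.Finite) (hgen : Subgroup.closure B = ⊤)
    (hB : ∀ a ∈ B, ∀ b ∈ B, IsOfFinOrder (a * b)) : ∃ E ∈ C, MulAction.IsBlock G E := by
  by_cases hmove : ∀ E ∈ C, ∃ b ∈ B, b • E ≠ E ∧ b • E ≠ Eᶜ
  · have hB' : ∀ b ∈ B, IsOfFinOrder b := fun b hb =>
      isOfFinOrder_of_mul_self (hB b hb b hb)
    obtain ⟨E, hE⟩ := hC.exists_maximal_displaced hsep hB' hBfin
      (fun E hE => (hmove E hE).imp fun _ h => ⟨h.1, h.2.1⟩) hne hempty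
    exact ⟨E, hE.prop.1, hC.isBlock_of_maximal_displaced hB hgen hmove hE⟩
  · push Not at hmove
    obtain ⟨E, hE, hfix⟩ := hmove
    exact ⟨E, hE, isBlock_of_smul_eq_or_eq_compl hgen fun b hb => or_iff_not_imp_left.2 (hfix b hb)⟩

end IsNestedSystem

end NestedSystem

section EdgeBoundary

variable {K : Type*} [Group K] {S T E F : Set K}

/-- The edge boundary of `E` in the Cayley graph of `K` with respect to `S`: the edges `(x, x * s)`
with `s ∈ S` that have exactly one endpoint in `E`. Edges are encoded as ordered pairs. -/
def edgeBoundary (S E : Set K) : Set (K × K) :=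
  {p | p.1⁻¹ * p.2 ∈ S ∧ ¬(p.1 ∈ E ↔ p.2 ∈ E)}

theorem edgeBoundary_compl (S E : Set K) : edgeBoundary S Eᶜ = edgeBoundary S E := by
  simp only [edgeBoundary, Set.mem_compl_iff, not_iff_not]

theorem edgeBoundary_smul (S E : Set K) (k : K) :
    edgeBoundary S (k • E) = k • edgeBoundary S E := by
  ext p
  simp [edgeBoundary, Set.mem_smul_set_iff_inv_smul_mem, mul_assoc]

theorem encard_edgeBoundary_smul (S E : Set K) (k : K) :
    (edgeBoundary S (k • E)).encard = (edgeBoundary S E).encard := by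
  rw [edgeBoundary_smul, Set.encard_smul_set]

theorem edgeBoundary_nonempty (hS : Subgroup.closure S = ⊤) {x y : K} (hx : x ∈ E) (hy : y ∉ E) :
    (edgeBoundary S E).Nonempty := by
  by_contra hempty
  have hmem : ∀ z, ∀ s ∈ S, (z ∈ E ↔ z * s ∈ E) := by
    intro z s hs
    by_contra h
    exact hempty ⟨(z, z * s), by simpa using hs, h⟩
  have hinv : ∀ g z, z ∈ E ↔ z * g ∈ E := by
    intro g
    have hg : g ∈ Subgroup.closure S := hS ▸ Subgroup.mem_top g
    induction hg using Subgroup.closure_induction with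
    | mem s hs => exact fun z => hmem z s hs
    | one => simp
    | mul a b _ _ ha hb => exact fun z => by rw [ha z, hb (z * a), mul_assoc]
    | inv a _ ha => exact fun z => by rw [ha (z * a⁻¹), inv_mul_cancel_right]
  exact hy (by simpa using (hinv (x⁻¹ * y) x).1 hx)

theorem eq_of_edgeBoundary_eq (hS : Subgroup.closure S = ⊤)
    (h : edgeBoundary S E = edgeBoundary S F) {x : K} (hxE : x ∈ E) (hxF : x ∈ F) : E = F := by
  ext y
  by_contra hy
  obtain ⟨p, hpS, hp⟩ :=
    edgeBoundary_nonempty (E := {z | z ∈ E ↔ z ∈ F}) hS (iff_of_true hxE hxF) hy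
  have hiff : p ∈ edgeBoundary S E ↔ p ∈ edgeBoundary S F := by rw [h]
  simp only [edgeBoundary, Set.mem_ofPred_eq, hpS, true_and] at hiff hp
  tauto

theorem edgeBoundary_inter_union_edgeBoundary_union_subset (S E F : Set K) :
    edgeBoundary S (E ∩ F) ∪ edgeBoundary S (E ∪ F) ⊆ edgeBoundary S E ∪ edgeBoundary S F := by
  rintro p hp
  simp only [edgeBoundary, Set.mem_union, Set.mem_inter_iff, Set.mem_ofPred_eq] at hp ⊢
  tauto

theorem edgeBoundary_inter_inter_edgeBoundary_union_subset (S E F : Set K) :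
    edgeBoundary S (E ∩ F) ∩ edgeBoundary S (E ∪ F) ⊆ edgeBoundary S E ∩ edgeBoundary S F := by
  rintro p hp
  simp only [edgeBoundary, Set.mem_union, Set.mem_inter_iff, Set.mem_ofPred_eq] at hp ⊢
  tauto

theorem encard_edgeBoundary_inter_add_union_le (S E F : Set K) :
    (edgeBoundary S (E ∩ F)).encard + (edgeBoundary S (E ∪ F)).encard ≤
      (edgeBoundary S E).encard + (edgeBoundary S F).encard := by
  rw [← Set.encard_union_add_encard_inter (edgeBoundary S E),
    ← Set.encard_union_add_encard_inter (edgeBoundary S (E ∩ F))]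
  exact add_le_add
    (Set.encard_le_encard (edgeBoundary_inter_union_edgeBoundary_union_subset S E F))
    (Set.encard_le_encard (edgeBoundary_inter_inter_edgeBoundary_union_subset S E F))

theorem encard_edgeBoundary_inter_add_union_lt {x y : K} (hxy : x⁻¹ * y ∈ S) (hx : x ∈ E \ F)
    (hy : y ∈ F \ E) (hE : (edgeBoundary S E).Finite) (hF : (edgeBoundary S F).Finite) :
    (edgeBoundary S (E ∩ F)).encard + (edgeBoundary S (E ∪ F)).encard <
      (edgeBoundary S E).encard + (edgeBoundary S F).encard := by
  have hsub := edgeBoundary_inter_union_edgeBoundary_union_subset S E F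
  have hssub : edgeBoundary S (E ∩ F) ∪ edgeBoundary S (E ∪ F) ⊂
      edgeBoundary S E ∪ edgeBoundary S F := by
    refine (Set.ssubset_iff_of_subset hsub).2 ⟨(x, y), .inl ⟨hxy, ?_⟩, ?_⟩
    · simp [hx.1, hy.2]
    · simp [edgeBoundary, hx.1, hx.2, hy.1, hy.2]
  rw [← Set.encard_union_add_encard_inter (edgeBoundary S E),
    ← Set.encard_union_add_encard_inter (edgeBoundary S (E ∩ F))]
  refine ENat.add_lt_add_of_lt_of_le ?_ (((hE.union hF).subset hsub).encard_lt_encard hssub)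
    (Set.encard_le_encard (edgeBoundary_inter_inter_edgeBoundary_union_subset S E F))
  simpa using (hE.inter_of_left _).subset
    (edgeBoundary_inter_inter_edgeBoundary_union_subset S E F)

theorem edgeBoundary_eq_biUnion (S E : Set K) :
    edgeBoundary S E = ⋃ s ∈ S, edgeBoundary {s} E := by
  ext p
  simp [edgeBoundary]

theorem edgeBoundary_mono (h : S ⊆ T) (E : Set K) : edgeBoundary S E ⊆ edgeBoundary T E :=
  fun _ hp => ⟨h hp.1, hp.2⟩

theorem edgeBoundary_singleton_mul_subset (a b : K) (E : Set K) :
    edgeBoundary {a * b} E ⊆ (fun p => (p.1, p.2 * b)) '' edgeBoundary {a} E ∪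
      (fun p => (p.1 * a⁻¹, p.2)) '' edgeBoundary {b} E := by
  rintro ⟨x, y⟩ ⟨hxy, hp⟩
  obtain rfl : y = x * (a * b) := inv_mul_eq_iff_eq_mul.1 hxy
  by_cases h : x ∈ E ↔ x * a ∈ E
  · exact .inr ⟨(x * a, x * (a * b)), ⟨by simp, by rwa [← h]⟩, by simp⟩
  · exact .inl ⟨(x, x * a), ⟨by simp, h⟩, by simp [mul_assoc]⟩

theorem edgeBoundary_singleton_inv_subset (a : K) (E : Set K) :
    edgeBoundary {a⁻¹} E ⊆ Prod.swap '' edgeBoundary {a} E := by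
  rintro ⟨x, y⟩ ⟨hxy, hp⟩
  refine ⟨(y, x), ⟨?_, fun h => hp h.symm⟩, rfl⟩
  simpa [inv_eq_iff_eq_inv] using congrArg (·⁻¹) hxy

theorem exists_encard_edgeBoundary_singleton_le (hS : Subgroup.closure S = ⊤) (g : K) :
    ∃ c : ℕ, ∀ E : Set K, (edgeBoundary {g} E).encard ≤ c * (edgeBoundary S E).encard := by
  have hg : g ∈ Subgroup.closure S := hS ▸ Subgroup.mem_top g
  induction hg using Subgroup.closure_induction with
  | mem s hs =>
    refine ⟨1, fun E => ?_⟩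
    rw [Nat.cast_one, one_mul]
    exact Set.encard_le_encard (edgeBoundary_mono (Set.singleton_subset_iff.2 hs) E)
  | one =>
    refine ⟨0, fun E => ?_⟩
    have hone : edgeBoundary {1} E = ∅ := by
      refine Set.eq_empty_of_forall_notMem fun p ⟨hp, hpE⟩ => hpE ?_
      rw [inv_mul_eq_one.1 hp]
    simp [hone]
  | mul a b _ _ ha hb =>
    obtain ⟨c, hc⟩ := ha
    obtain ⟨d, hd⟩ := hb
    refine ⟨c + d, fun E => ?_⟩
    calc (edgeBoundary {a * b} E).encard
        ≤ (edgeBoundary {a} E).encard + (edgeBoundary {b} E).encard :=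
          (Set.encard_le_encard (edgeBoundary_singleton_mul_subset a b E)).trans <|
            (Set.encard_union_le _ _).trans <|
              add_le_add (Set.encard_image_le _ _) (Set.encard_image_le _ _)
      _ ≤ c * (edgeBoundary S E).encard + d * (edgeBoundary S E).encard :=
          add_le_add (hc E) (hd E)
      _ = (c + d : ℕ) * (edgeBoundary S E).encard := by push_cast; rw [add_mul]
  | inv a _ ha =>
    obtain ⟨c, hc⟩ := ha
    exact ⟨c, fun E => (Set.encard_le_encard (edgeBoundary_singleton_inv_subset a E)).trans <|
      (Set.encard_image_le _ _).trans (hc E)⟩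

/-- A subset of a group is almost invariant if each right translation changes it only in finitely
many elements. -/
def AlmostInvariant (E : Set K) : Prop :=
  ∀ g, (edgeBoundary {g} E).Finite

theorem AlmostInvariant.of_closure_eq_top (hS : Subgroup.closure S = ⊤)
    (hE : (edgeBoundary S E).Finite) : AlmostInvariant E := by
  intro g
  obtain ⟨c, hc⟩ := exists_encard_edgeBoundary_singleton_le hS g
  exact Set.encard_lt_top_iff.1 ((hc E).trans_lt
    (WithTop.mul_lt_top (ENat.natCast_lt_top c) hE.encard_lt_top))

theorem finite_stabilizer_of_edgeBoundary (hfin : (edgeBoundary S E).Finite)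
    (hne : (edgeBoundary S E).Nonempty) : (MulAction.stabilizer K E : Set K).Finite := by
  obtain ⟨p, hp⟩ := hne
  refine Set.Finite.of_finite_image (f := (· • p)) (hfin.subset ?_) ?_
  · rintro _ ⟨k, hk, rfl⟩
    rw [← MulAction.mem_stabilizer_iff.1 hk, edgeBoundary_smul]
    exact Set.smul_mem_smul_set hp
  · exact fun a _ b _ hab => mul_right_cancel (congrArg Prod.fst hab)

theorem finite_edgeBoundary_of_finite (hS : S.Finite) (hE : E.Finite) :
    (edgeBoundary S E).Finite := by
  refine (((hE.prod hS).image fun q => (q.1, q.1 * q.2)).union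
    ((hE.prod hS).image fun q => (q.1 * q.2⁻¹, q.1))).subset ?_
  rintro ⟨x, y⟩ ⟨hxy, hp⟩
  by_cases hx : x ∈ E
  · exact .inl ⟨(x, x⁻¹ * y), ⟨hx, hxy⟩, by simp⟩
  · have hy : y ∈ E := by_contra fun hy => hp (iff_of_false hx hy)
    exact .inr ⟨(y, x⁻¹ * y), ⟨hy, hxy⟩, by simp⟩

end EdgeBoundary

section Cuts

variable {X Y : Type*} {E F : Set X}

/-- A cut of a set: a partition into two infinite parts, encoded by one of the parts. -/
def IsCut (E : Set X) : Prop :=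
  E.Infinite ∧ Eᶜ.Infinite

theorem IsCut.compl (hE : IsCut E) : IsCut Eᶜ :=
  ⟨hE.2, by rw [_root_.compl_compl]; exact hE.1⟩

theorem IsCut.smul {G : Type*} [Group G] [MulAction G X] (g : G) (hE : IsCut E) :
    IsCut (g • E) :=
  ⟨hE.1.smul_set, by rw [← Set.smul_set_compl]; exact hE.2.smul_set⟩

theorem IsCut.preimage {f : Y → X} (hf : Function.Surjective f) (hE : IsCut E) :
    IsCut (f ⁻¹' E) :=
  ⟨hE.1.preimage (by simp [hf.range_eq]), hE.2.preimage (by simp [hf.range_eq])⟩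

theorem IsCut.inter_union (hE : IsCut E) (hinter : (E ∩ F).Infinite)
    (hunion : (Eᶜ ∩ Fᶜ).Infinite) : IsCut (E ∩ F) ∧ IsCut (E ∪ F) :=
  ⟨⟨hinter, hE.2.mono (Set.compl_subset_compl.2 Set.inter_subset_left)⟩,
    ⟨hE.1.mono Set.subset_union_left, by rwa [Set.compl_union]⟩⟩

theorem IsCut.uncross (hE : IsCut E) (hF : IsCut F) :
    (IsCut (E ∩ F) ∧ IsCut (E ∪ F)) ∨ (IsCut (E ∩ Fᶜ) ∧ IsCut (E ∪ Fᶜ)) := by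
  by_cases hinter : (E ∩ F).Finite
  · refine .inr (hE.inter_union ?_ ?_)
    · exact (hE.1.sdiff hinter).mono fun x hx => ⟨hx.1, fun hxF => hx.2 ⟨hx.1, hxF⟩⟩
    · exact (hF.1.sdiff hinter).mono fun x hx => ⟨fun hxE => hx.2 ⟨hxE, hx.1⟩, not_not.2 hx.1⟩
  by_cases hunion : (Eᶜ ∩ Fᶜ).Finite
  · refine .inr (hE.inter_union ?_ ?_)
    · exact (hF.2.sdiff hunion).mono fun x hx => ⟨by_contra fun hxE => hx.2 ⟨hxE, hx.1⟩, hx.1⟩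
    · exact (hE.2.sdiff hunion).mono fun x hx => ⟨hx.1, fun hxF => hx.2 ⟨hx.1, hxF⟩⟩
  exact .inl (hE.inter_union hinter hunion)

end Cuts

section MinCuts

variable {K : Type*} [Group K] {S E F : Set K}

/-- A minimal cut of the Cayley graph of `K` with respect to `S`: a cut with finite edge boundary
of the least possible size. -/
structure IsMinCut (S E : Set K) : Prop where
  isCut : IsCut E
  finite_edgeBoundary : (edgeBoundary S E).Finite
  encard_le : ∀ F, IsCut F → (edgeBoundary S E).encard ≤ (edgeBoundary S F).encard

theorem exists_isMinCut (hE : IsCut E) (hfin : (edgeBoundary S E).Finite) :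
    ∃ F, IsMinCut S F := by
  obtain ⟨F, hF, hmin⟩ :=
    exists_minimalFor_of_wellFoundedLT IsCut (fun F => (edgeBoundary S F).encard) ⟨E, hE⟩
  have hle : ∀ F', IsCut F' → (edgeBoundary S F).encard ≤ (edgeBoundary S F').encard :=
    fun F' hF' => (le_total _ _).elim id (hmin hF')
  exact ⟨F, hF, Set.encard_lt_top_iff.1 ((hle E hE).trans_lt hfin.encard_lt_top), hle⟩

namespace IsMinCut

theorem of_encard_le (hE : IsMinCut S E) (hF : IsCut F)
    (h : (edgeBoundary S F).encard ≤ (edgeBoundary S E).encard) : IsMinCut S F :=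
  ⟨hF, Set.encard_lt_top_iff.1 (h.trans_lt hE.finite_edgeBoundary.encard_lt_top),
    fun _ hF' => h.trans (hE.encard_le _ hF')⟩

theorem compl (hE : IsMinCut S E) : IsMinCut S Eᶜ :=
  hE.of_encard_le hE.isCut.compl (by rw [edgeBoundary_compl])

theorem smul (k : K) (hE : IsMinCut S E) : IsMinCut S (k • E) :=
  hE.of_encard_le (hE.isCut.smul k) (encard_edgeBoundary_smul S E k).le

theorem inter (hE : IsMinCut S E) (hF : IsMinCut S F) (hinter : IsCut (E ∩ F))
    (hunion : IsCut (E ∪ F)) : IsMinCut S (E ∩ F) := by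
  refine hE.of_encard_le hinter ?_
  refine (ENat.add_le_add_iff_right hF.finite_edgeBoundary.encard_lt_top.ne).1 ?_
  exact (add_le_add_right (hF.encard_le _ hunion) _).trans
    (encard_edgeBoundary_inter_add_union_le S E F)

theorem union (hE : IsMinCut S E) (hF : IsMinCut S F) (hinter : IsCut (E ∩ F))
    (hunion : IsCut (E ∪ F)) : IsMinCut S (E ∪ F) := by
  have h := hE.compl.inter hF.compl (Set.compl_union E F ▸ hunion.compl)
    (Set.compl_inter E F ▸ hinter.compl)
  simpa only [Set.compl_inter, _root_.compl_compl] using h.compl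

theorem edgeBoundary_nonempty (hS : Subgroup.closure S = ⊤) (hE : IsMinCut S E) :
    (edgeBoundary S E).Nonempty := by
  obtain ⟨x, hx⟩ := hE.isCut.1.nonempty
  obtain ⟨y, hy⟩ := hE.isCut.2.nonempty
  exact _root_.edgeBoundary_nonempty hS hx hy

-- Otherwise `E \ T` would be a cut with smaller boundary.
theorem exists_edge_within (hS : Subgroup.closure S = ⊤) (hE : IsMinCut S E) {T : Set K}
    (hT : T.Finite) {x : K} (hxE : x ∈ E) (hxT : x ∈ T) :
    ∃ p ∈ edgeBoundary S T, p.1 ∈ E ∧ p.2 ∈ E := by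
  by_contra! hnone
  obtain ⟨y, hy⟩ := hE.isCut.2.nonempty
  obtain ⟨q, hqS, hq⟩ :=
    _root_.edgeBoundary_nonempty (E := E ∩ T) hS ⟨hxE, hxT⟩ fun h => hy h.1
  have hcut : IsCut (E \ T) :=
    ⟨hE.isCut.1.sdiff hT, hE.isCut.2.mono (Set.compl_subset_compl.2 Set.sdiff_subset)⟩
  have hnone' (p : K × K) (hpS : p.1⁻¹ * p.2 ∈ S) (hpT : ¬(p.1 ∈ T ↔ p.2 ∈ T)) :
      p.1 ∈ E → p.2 ∉ E := hnone p ⟨hpS, hpT⟩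
  have hsub : edgeBoundary S (E \ T) ⊆ edgeBoundary S E := by
    refine fun p ⟨hpS, hp⟩ => ⟨hpS, ?_⟩
    have := hnone' p hpS
    simp only [Set.mem_sdiff] at hp
    tauto
  have hssub : edgeBoundary S (E \ T) ⊂ edgeBoundary S E := by
    have := hnone' q hqS
    simp only [Set.mem_inter_iff] at hq
    refine (Set.ssubset_iff_of_subset hsub).2 ⟨q, ⟨hqS, by tauto⟩, fun ⟨_, hq'⟩ => ?_⟩
    simp only [Set.mem_sdiff] at hq'
    tauto
  exact (hE.encard_le _ hcut).not_gt
    ((hE.finite_edgeBoundary.subset hsub).encard_lt_encard hssub)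

end IsMinCut

end MinCuts

section LimitSet

variable {X : Type*}

/-- The limit of an ultrafilter on the power set of `X`, that is, its limit in the product topology
on `X → Prop`. -/
def limitSet (U : Ultrafilter (Set X)) : Set X :=
  {x | ∀ᶠ E in (U : Filter (Set X)), x ∈ E}

theorem eventually_mem_iff_mem_limitSet (U : Ultrafilter (Set X)) {T : Set X} (hT : T.Finite) :
    ∀ᶠ E in (U : Filter (Set X)), ∀ x ∈ T, (x ∈ E ↔ x ∈ limitSet U) := by
  refine (Filter.eventually_all_finite hT).2 fun x _ => ?_
  by_cases hx : x ∈ limitSet U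
  · exact hx.mono fun E hE => iff_of_true hE hx
  · exact (Ultrafilter.eventually_not.2 hx).mono fun E hE => iff_of_false hE hx

theorem limitSet_map_compl (U : Ultrafilter (Set X)) :
    limitSet (U.map compl) = (limitSet U)ᶜ := by
  ext x
  exact Ultrafilter.eventually_not

variable {K : Type*} [Group K] {S : Set K}

theorem eventually_subset_edgeBoundary (U : Ultrafilter (Set K)) {P : Set (K × K)}
    (hP : P.Finite) (hsub : P ⊆ edgeBoundary S (limitSet U)) :
    ∀ᶠ E in U, P ⊆ edgeBoundary S E := by
  filter_upwards [eventually_mem_iff_mem_limitSet U (hP.image Prod.fst),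
    eventually_mem_iff_mem_limitSet U (hP.image Prod.snd)] with E hfst hsnd p hp
  refine ⟨(hsub hp).1, ?_⟩
  rw [hfst _ (Set.mem_image_of_mem _ hp), hsnd _ (Set.mem_image_of_mem _ hp)]
  exact (hsub hp).2

theorem encard_edgeBoundary_limitSet_le {U : Ultrafilter (Set K)} {m : ℕ∞}
    (hm : ∀ᶠ E in U, (edgeBoundary S E).encard ≤ m) :
    (edgeBoundary S (limitSet U)).encard ≤ m := by
  by_contra! hlt
  obtain ⟨P, hP, hcard⟩ := Set.exists_subset_encard_eq (Order.add_one_le_of_lt hlt)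
  have hm' : m < m + 1 := ENat.lt_add_one_iff (ne_top_of_lt hlt) |>.2 le_rfl
  have hPfin : P.Finite := Set.encard_ne_top_iff.1 (hcard ▸ by simpa using ne_top_of_lt hlt)
  obtain ⟨E, hPE, hE⟩ := ((eventually_subset_edgeBoundary U hPfin hP).and hm).exists
  exact ((Set.encard_le_encard hPE).trans hE).not_gt (hcard ▸ hm')

theorem infinite_limitSet (hSfin : S.Finite) (hS : Subgroup.closure S = ⊤)
    {U : Ultrafilter (Set K)} (hU : ∀ᶠ E in U, IsMinCut S E) (hne : (limitSet U).Nonempty) :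
    (limitSet U).Infinite := by
  intro hfin
  obtain ⟨x, hx⟩ := hne
  have hbd := finite_edgeBoundary_of_finite hSfin hfin
  obtain ⟨E, ⟨hE, hxE⟩, hfst, hsnd⟩ := ((hU.and hx).and
    ((eventually_mem_iff_mem_limitSet U (hbd.image Prod.fst)).and
      (eventually_mem_iff_mem_limitSet U (hbd.image Prod.snd)))).exists
  obtain ⟨p, hp, hp₁, hp₂⟩ := hE.exists_edge_within hS hfin hxE hx
  exact hp.2 (iff_of_true ((hfst _ (Set.mem_image_of_mem _ hp)).1 hp₁)
    ((hsnd _ (Set.mem_image_of_mem _ hp)).1 hp₂))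

theorem isCut_limitSet (hSfin : S.Finite) (hS : Subgroup.closure S = ⊤)
    {U : Ultrafilter (Set K)} (hU : ∀ᶠ E in U, IsMinCut S E) (hne : (limitSet U).Nonempty)
    (hne' : (limitSet U)ᶜ.Nonempty) : IsCut (limitSet U) := by
  refine ⟨infinite_limitSet hSfin hS hU hne, ?_⟩
  rw [← limitSet_map_compl] at hne' ⊢
  exact infinite_limitSet hSfin hS (Filter.eventually_map.2 (hU.mono fun E hE => hE.compl)) hne'

theorem eventually_eq_limitSet (hSfin : S.Finite) (hS : Subgroup.closure S = ⊤)
    {U : Ultrafilter (Set K)} (hU : ∀ᶠ E in U, IsMinCut S E) (hne : (limitSet U).Nonempty)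
    (hne' : (limitSet U)ᶜ.Nonempty) : ∀ᶠ E in U, E = limitSet U := by
  obtain ⟨x, hx⟩ := hne
  obtain ⟨M, hM⟩ := hU.exists
  have hle : (edgeBoundary S (limitSet U)).encard ≤ (edgeBoundary S M).encard :=
    encard_edgeBoundary_limitSet_le (hU.mono fun E hE => hE.encard_le _ hM.isCut)
  have hlim : IsMinCut S (limitSet U) :=
    hM.of_encard_le (isCut_limitSet hSfin hS hU ⟨x, hx⟩ hne') hle
  filter_upwards [hU, hx, eventually_subset_edgeBoundary U hlim.finite_edgeBoundary subset_rfl]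
    with E hE hxE hsub
  have heq : edgeBoundary S (limitSet U) = edgeBoundary S E :=
    hlim.finite_edgeBoundary.eq_of_subset_of_encard_le hsub (hE.encard_le _ hlim.isCut)
  exact (eq_of_edgeBoundary_eq hS heq hx hxE).symm

theorem finite_setOf_isMinCut_separating (hSfin : S.Finite) (hS : Subgroup.closure S = ⊤)
    (x y : K) : {E | IsMinCut S E ∧ x ∈ E ∧ y ∉ E}.Finite := by
  by_contra hinf
  set M := {E | IsMinCut S E ∧ x ∈ E ∧ y ∉ E}
  have := Set.Infinite.cofinite_inf_principal_neBot hinf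
  let U : Ultrafilter (Set K) := Ultrafilter.of (Filter.cofinite ⊓ Filter.principal M)
  have hU : (U : Filter (Set K)) ≤ Filter.cofinite ⊓ Filter.principal M := Ultrafilter.of_le _
  have hUM : ∀ᶠ E in U, E ∈ M := Filter.le_principal_iff.1 (hU.trans inf_le_right)
  have hUne : ∀ᶠ E in U, E ≠ limitSet U :=
    (hU.trans inf_le_left) (Set.finite_singleton (limitSet U)).compl_mem_cofinite
  have heq := eventually_eq_limitSet hSfin hS (hUM.mono fun E hE => hE.1)
    ⟨x, hUM.mono fun E hE => hE.2.1⟩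
    ⟨y, Ultrafilter.eventually_not.1 (hUM.mono fun E hE => hE.2.2)⟩
  obtain ⟨E, hne, heq⟩ := (hUne.and heq).exists
  exact hne heq

end LimitSet

section CutWeight

open scoped ENNReal NNReal

variable {K : Type*} [Group K] {S E F : Set K} {w : K → ℝ≥0}

/-- The weight of the set of pairs `(x, x * g)` with exactly one entry in `E`, where the pair
`(x, x * g)` weighs `w g`. -/
noncomputable def cutWeight (w : K → ℝ≥0) (E : Set K) : ℝ≥0∞ :=
  ∑' g, w g * ((edgeBoundary {g} E).encard : ℝ≥0∞)

theorem cutWeight_compl (w : K → ℝ≥0) (E : Set K) : cutWeight w Eᶜ = cutWeight w E := by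
  simp only [cutWeight, edgeBoundary_compl]

theorem cutWeight_smul (w : K → ℝ≥0) (E : Set K) (k : K) :
    cutWeight w (k • E) = cutWeight w E := by
  simp only [cutWeight, encard_edgeBoundary_smul]

theorem cutWeight_inter_add_union_lt (hw : ∀ g, w g ≠ 0) (hEw : cutWeight w E ≠ ∞)
    (hFw : cutWeight w F ≠ ∞) (hE : AlmostInvariant E) (hF : AlmostInvariant F)
    (hEF : ¬ E ⊆ F) (hFE : ¬ F ⊆ E) :
    cutWeight w (E ∩ F) + cutWeight w (E ∪ F) < cutWeight w E + cutWeight w F := by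
  obtain ⟨x, hx⟩ := Set.not_subset.1 hEF
  obtain ⟨y, hy⟩ := Set.not_subset.1 hFE
  have hle (g : K) : w g * (((edgeBoundary {g} (E ∩ F)).encard +
      (edgeBoundary {g} (E ∪ F)).encard : ℕ∞) : ℝ≥0∞) ≤
        w g * (((edgeBoundary {g} E).encard + (edgeBoundary {g} F).encard : ℕ∞) : ℝ≥0∞) :=
    mul_le_mul' le_rfl (ENat.toENNReal_le.2 (encard_edgeBoundary_inter_add_union_le {g} E F))
  have hfin := ENNReal.add_ne_top.2 ⟨hEw, hFw⟩
  simp only [cutWeight, ← ENNReal.tsum_add, ← mul_add, ← ENat.toENNReal_add] at hfin ⊢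
  refine ENNReal.tsum_lt_tsum (i := x⁻¹ * y)
    (ne_top_of_le_ne_top hfin (ENNReal.tsum_le_tsum hle)) hle ?_
  refine ENNReal.mul_lt_mul_right (by simpa using hw _) ENNReal.coe_ne_top ?_
  exact ENat.toENNReal_lt.2 (encard_edgeBoundary_inter_add_union_lt rfl hx hy (hE _) (hF _))

theorem exists_cutWeight_ne_top [Countable K] (hS : Subgroup.closure S = ⊤) :
    ∃ w : K → ℝ≥0, (∀ g, w g ≠ 0) ∧
      ∀ E, (edgeBoundary S E).Finite → cutWeight w E ≠ ∞ := by
  choose c hc using exists_encard_edgeBoundary_singleton_le hS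
  obtain ⟨w, hw, hsum⟩ := ENNReal.exists_pos_tsum_mul_lt_of_countable (ε := 1) one_ne_zero
    (fun g => (c g : ℝ≥0∞)) fun g => ENNReal.natCast_ne_top _
  refine ⟨w, fun g => (hw g).ne', fun E hE => ?_⟩
  have hbound : cutWeight w E ≤ (∑' g, (c g : ℝ≥0∞) * w g) * (edgeBoundary S E).encard := by
    rw [← ENNReal.tsum_mul_right]
    refine ENNReal.tsum_le_tsum fun g => ?_
    rw [mul_comm (c g : ℝ≥0∞), mul_assoc, ← ENat.toENNReal_coe, ← ENat.toENNReal_mul]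
    gcongr
    exact hc g E
  exact ne_top_of_le_ne_top (ENNReal.mul_ne_top hsum.ne_top
    (by simpa using hE)) hbound

/-- A minimal cut which has the least weight among all minimal cuts. -/
structure IsOptimalCut (S : Set K) (w : K → ℝ≥0) (E : Set K) : Prop extends IsMinCut S E where
  cutWeight_le : ∀ F, IsMinCut S F → cutWeight w E ≤ cutWeight w F

theorem IsMinCut.exists_normalized (hS : Subgroup.closure S = ⊤) (hE : IsMinCut S E)
    (w : K → ℝ≥0) :
    ∃ F ∈ ⋃ s ∈ S, {F | IsMinCut S F ∧ 1 ∈ F ∧ s ∉ F}, cutWeight w F = cutWeight w E := by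
  obtain ⟨⟨x, y⟩, hxy, hp⟩ := hE.edgeBoundary_nonempty hS
  wlog hx : x ∈ E generalizing E
  · rw [← cutWeight_compl]
    exact this hE.compl (by simpa only [Set.mem_compl_iff, not_iff_not] using hp) hx
  have hy : y ∉ E := fun hy => hp (iff_of_true hx hy)
  refine ⟨x⁻¹ • E, Set.mem_biUnion hxy ⟨hE.smul x⁻¹, ?_, ?_⟩, cutWeight_smul w E x⁻¹⟩
  · simpa [Set.mem_smul_set_iff_inv_smul_mem] using hx
  · simpa [Set.mem_smul_set_iff_inv_smul_mem] using hy

theorem exists_isOptimalCut (hSfin : S.Finite) (hS : Subgroup.closure S = ⊤)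
    (hE : IsMinCut S E) (w : K → ℝ≥0) : ∃ F, IsOptimalCut S w F := by
  have hfin : (⋃ s ∈ S, {F | IsMinCut S F ∧ 1 ∈ F ∧ s ∉ F}).Finite :=
    hSfin.biUnion fun s _ => finite_setOf_isMinCut_separating hSfin hS 1 s
  obtain ⟨E', hE', -⟩ := hE.exists_normalized hS w
  obtain ⟨F, hF, hmin⟩ := Set.exists_min_image _ (cutWeight w) hfin ⟨E', hE'⟩
  obtain ⟨-, -, hF', -⟩ := Set.mem_iUnion₂.1 hF
  refine ⟨F, hF', fun M hM => ?_⟩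
  obtain ⟨M', hM', heq⟩ := hM.exists_normalized hS w
  exact heq ▸ hmin M' hM'

namespace IsOptimalCut

theorem of_cutWeight_eq (hE : IsOptimalCut S w E) (hF : IsMinCut S F)
    (h : cutWeight w F = cutWeight w E) : IsOptimalCut S w F :=
  ⟨hF, fun M hM => h ▸ hE.cutWeight_le M hM⟩

theorem compl (hE : IsOptimalCut S w E) : IsOptimalCut S w Eᶜ :=
  hE.of_cutWeight_eq hE.toIsMinCut.compl (cutWeight_compl w E)

theorem smul (k : K) (hE : IsOptimalCut S w E) : IsOptimalCut S w (k • E) :=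
  hE.of_cutWeight_eq (hE.toIsMinCut.smul k) (cutWeight_smul w E k)

theorem subset_or_subset (hS : Subgroup.closure S = ⊤) (hw : ∀ g, w g ≠ 0)
    (hwfin : ∀ E, (edgeBoundary S E).Finite → cutWeight w E ≠ ∞)
    (hE : IsOptimalCut S w E) (hF : IsOptimalCut S w F) (hinter : IsCut (E ∩ F))
    (hunion : IsCut (E ∪ F)) : E ⊆ F ∨ F ⊆ E := by
  by_contra! h
  refine (cutWeight_inter_add_union_lt hw (hwfin E hE.finite_edgeBoundary)
    (hwfin F hF.finite_edgeBoundary) (.of_closure_eq_top hS hE.finite_edgeBoundary)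
    (.of_closure_eq_top hS hF.finite_edgeBoundary) h.1 h.2).not_ge ?_
  exact add_le_add
    (hE.cutWeight_le _ (hE.toIsMinCut.inter hF.toIsMinCut hinter hunion))
    (hF.cutWeight_le _ (hE.toIsMinCut.union hF.toIsMinCut hinter hunion))

end IsOptimalCut

theorem isNestedSystem_isOptimalCut (hS : Subgroup.closure S = ⊤) (hw : ∀ g, w g ≠ 0)
    (hwfin : ∀ E, (edgeBoundary S E).Finite → cutWeight w E ≠ ∞) :
    IsNestedSystem K {E | IsOptimalCut S w E} where
  smul_mem g _ hE := hE.smul g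
  compl_mem hE := hE.compl
  nested {E F} hE hF := by
    rcases hE.isCut.uncross hF.isCut with ⟨hinter, hunion⟩ | ⟨hinter, hunion⟩
    · exact (hE.subset_or_subset hS hw hwfin hF hinter hunion).imp_right .inl
    · exact .inr (.inr (hE.subset_or_subset hS hw hwfin hF.compl hinter hunion))

end CutWeight

section MultiEnded

variable {K : Type*} [Group K]

/-- A group with at least two ends: it has an almost invariant subset that is infinite and has
infinite complement. -/
def MultiEnded (K : Type*) [Group K] : Prop :=
  ∃ E : Set K, IsCut E ∧ AlmostInvariant E

theorem countable_of_closure_eq_top {S : Set K} (hSfin : S.Finite)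
    (hS : Subgroup.closure S = ⊤) : Countable K := by
  have : Countable S := hSfin.countable
  have hsurj : Function.Surjective (FreeGroup.lift (Subtype.val : S → K)) := by
    rw [← MonoidHom.range_eq_top, FreeGroup.range_lift_eq_closure, Subtype.range_coe, hS]
  exact hsurj.countable

theorem MultiEnded.exists_isNestedSystem (hK : MultiEnded K) {S : Set K} (hSfin : S.Finite)
    (hS : Subgroup.closure S = ⊤) :
    ∃ C : Set (Set K), IsNestedSystem K C ∧ C.Nonempty ∧ ∀ E ∈ C, IsMinCut S E := by
  have := countable_of_closure_eq_top hSfin hS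
  obtain ⟨E, hE, hEinv⟩ := hK
  have hEfin : (edgeBoundary S E).Finite := by
    rw [edgeBoundary_eq_biUnion]
    exact hSfin.biUnion fun s _ => hEinv s
  obtain ⟨M, hM⟩ := exists_isMinCut hE hEfin
  obtain ⟨w, hw, hwfin⟩ := exists_cutWeight_ne_top hS
  exact ⟨_, isNestedSystem_isOptimalCut hS hw hwfin, exists_isOptimalCut hSfin hS hM w,
    fun F hF => hF.toIsMinCut⟩

theorem MultiEnded.exists_not_isOfFinOrder_mul (hK : MultiEnded K) {B : Set K}
    (hBfin : B.Finite) (hgen : Subgroup.closure B = ⊤) :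
    ∃ a ∈ B, ∃ b ∈ B, ¬ IsOfFinOrder (a * b) := by
  by_contra! hB
  obtain ⟨C, hC, hne, hmin⟩ := hK.exists_isNestedSystem hBfin hgen
  have hsep (x y : K) : {E ∈ C | x ∈ E ∧ y ∉ E}.Finite :=
    (finite_setOf_isMinCut_separating hBfin hgen x y).subset fun E hE => ⟨hmin E hE.1, hE.2⟩
  have hempty : ∅ ∉ C := fun h => (hmin ∅ h).isCut.1 Set.finite_empty
  obtain ⟨E, hEC, hblock⟩ := hC.exists_isBlock hsep hne hempty hBfin hgen hB
  have hE := hmin E hEC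
  obtain ⟨x, hx⟩ := hE.isCut.1.nonempty
  refine hE.isCut.1 ?_
  rw [← hblock.orbit_stabilizer_eq hx]
  have : Finite (MulAction.stabilizer K E) :=
    finite_stabilizer_of_edgeBoundary hE.finite_edgeBoundary (hE.edgeBoundary_nonempty hgen)
  exact Set.finite_range _

end MultiEnded

section FreeGroup

variable {α : Type*} [DecidableEq α]

theorem head?_toWord_inv (z : FreeGroup α) :
    z⁻¹.toWord.head? = z.toWord.getLast?.map fun p => (p.1, !p.2) := by
  simp [FreeGroup.toWord_inv, FreeGroup.invRev]

theorem getLast?_toWord_of_inv_mul {b : α} {z : FreeGroup α} (hz : z ≠ 1)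
    (hzb : z ≠ FreeGroup.of b) :
    ((FreeGroup.of b)⁻¹ * z).toWord.getLast? = z.toWord.getLast? := by
  have hword : ((FreeGroup.of b)⁻¹ * z).toWord = FreeGroup.reduce ((b, false) :: z.toWord) := by
    rw [FreeGroup.toWord_mul, FreeGroup.toWord_inv, FreeGroup.toWord_of]
    simp [FreeGroup.invRev]
  have hnil : z.toWord ≠ [] := by rwa [Ne, FreeGroup.toWord_eq_nil_iff]
  have hsingle : z.toWord ≠ [(b, true)] := by
    rwa [← FreeGroup.toWord_of, Ne, FreeGroup.toWord_inj]
  rw [hword, FreeGroup.reduce.cons, FreeGroup.reduce_toWord]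
  match z.toWord, hnil, hsingle with
  | [(c, ε)], _, hne =>
    by_cases hc : b = c ∧ ε = true
    · exact absurd (by rw [hc.1, hc.2]) hne
    · simp [hc]
  | c :: d :: L, _, _ =>
    by_cases hc : b = c.1 ∧ c.2 = true <;> simp [hc]

theorem head?_toWord_mul_of {b : α} {z : FreeGroup α} (hz : z ≠ 1)
    (hzb : z ≠ (FreeGroup.of b)⁻¹) :
    (z * FreeGroup.of b).toWord.head? = z.toWord.head? := by
  have h := getLast?_toWord_of_inv_mul (b := b) (inv_ne_one.2 hz)
    fun h => hzb (inv_eq_iff_eq_inv.1 h)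
  rw [← inv_inv (z * _), head?_toWord_inv, mul_inv_rev, h, ← head?_toWord_inv, inv_inv]

/-- The elements of a free group whose reduced word starts with the letter `a`: the prototype of a
cut, since exactly one edge of the Cayley tree leaves it. -/
def startingSet (a : α) : Set (FreeGroup α) :=
  {z | z.toWord.head? = some (a, true)}

theorem isCut_startingSet (a : α) : IsCut (startingSet a) := by
  have hinj : Function.Injective fun n : ℕ => FreeGroup.of a ^ n := fun m n h => by
    simpa using congrArg FreeGroup.norm h
  constructor
  · refine Set.infinite_of_injective_forall_mem
      (hinj.comp (add_left_injective 1)) fun n => ?_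
    simp [startingSet, FreeGroup.toWord_of_pow, List.head?_replicate]
  · refine Set.infinite_of_injective_forall_mem (inv_injective.comp hinj) fun n => ?_
    simp only [startingSet, Function.comp_apply, Set.mem_compl_iff, Set.mem_ofPred_eq,
      head?_toWord_inv]
    cases n <;> simp [FreeGroup.toWord_of_pow, List.getLast?_replicate]

theorem edgeBoundary_startingSet_subset (a : α) :
    edgeBoundary (Set.range FreeGroup.of) (startingSet a) ⊆ {(1, FreeGroup.of a)} := by
  rintro ⟨x, y⟩ ⟨⟨b, hb⟩, hp⟩
  obtain rfl : y = x * FreeGroup.of b := inv_mul_eq_iff_eq_mul.1 hb.symm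
  by_cases hx : x = 1
  · obtain rfl : b = a := by simpa [hx, startingSet] using hp
    simp [hx]
  by_cases hxb : x = (FreeGroup.of b)⁻¹
  · simp [hxb, startingSet, head?_toWord_inv, -FreeGroup.toWord_inv] at hp
  · exact absurd (by simp only [startingSet, Set.mem_ofPred_eq, head?_toWord_mul_of hx hxb]) hp

end FreeGroup

theorem multiEnded_freeGroup (α : Type*) [Nonempty α] : MultiEnded (FreeGroup α) := by
  classical
  obtain ⟨a⟩ := ‹Nonempty α›
  exact ⟨startingSet a, isCut_startingSet a, .of_closure_eq_top (FreeGroup.closure_range_of α)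
    ((Set.finite_singleton _).subset (edgeBoundary_startingSet_subset a))⟩

section VirtuallyFree

variable {K L : Type*} [Group K] [Group L]

theorem MultiEnded.of_mulEquiv (e : K ≃* L) (hK : MultiEnded K) : MultiEnded L := by
  obtain ⟨E, hE, hinv⟩ := hK
  refine ⟨e.symm ⁻¹' E, hE.preimage e.symm.surjective, fun g => ?_⟩
  refine Set.Finite.of_finite_image (f := Prod.map e.symm e.symm)
    ((hinv (e.symm g)).subset ?_) (e.symm.injective.prodMap e.symm.injective).injOn
  rintro _ ⟨p, ⟨hp, hpE⟩, rfl⟩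
  exact ⟨by simpa using congrArg e.symm hp, hpE⟩

theorem MultiEnded.of_finiteIndex {H : Subgroup K} [H.FiniteIndex] (hH : MultiEnded H) :
    MultiEnded K := by
  obtain ⟨E, hE, hinv⟩ := hH
  obtain ⟨T, hT, -⟩ := H.exists_isComplement_right 1
  have hTfin : T.Finite := hT.finite_right_iff.2 inferInstance
  let π (k : K) : H := (hT.equiv k).1
  have hπ_mul (h : H) (k : K) : π (h * k) = h * π k := by
    simp only [π, Subgroup.IsComplement.equiv_mul_left]
  have hπ : Function.Surjective π := fun h =>
    ⟨(h * (π 1)⁻¹ : H) * 1, by rw [hπ_mul, inv_mul_cancel_right]⟩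
  refine ⟨π ⁻¹' E, hE.preimage hπ, fun g => ?_⟩
  refine (hTfin.biUnion fun t _ => (hinv (π (t * g))).image fun p : H × H =>
    ((p.1 * t, p.1 * t * g) : K × K)).subset ?_
  rintro ⟨x, y⟩ ⟨hxy, hp⟩
  obtain rfl : y = x * g := inv_mul_eq_iff_eq_mul.1 hxy
  have hx : (π x : K) * (hT.equiv x).2 = x := hT.equiv_fst_mul_equiv_snd x
  refine Set.mem_biUnion (hT.equiv x).2.2 ⟨(π x, π (x * g)), ⟨?_, hp⟩, by simp only [hx]⟩
  rw [Set.mem_singleton_iff, inv_mul_eq_iff_eq_mul, ← hπ_mul, ← mul_assoc, hx]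

theorem multiEnded_of_isFreeGroup [IsFreeGroup K] [Infinite K] : MultiEnded K := by
  let e := IsFreeGroup.toFreeGroup K
  have : Nonempty (IsFreeGroup.Generators K) := by
    by_contra hempty
    rw [not_nonempty_iff] at hempty
    exact not_finite_iff_infinite.2 ‹_› (Finite.of_equiv _ e.symm.toEquiv)
  exact (multiEnded_freeGroup (IsFreeGroup.Generators K)).of_mulEquiv e.symm

theorem VirtuallyFree.multiEnded [Infinite K] (hK : VirtuallyFree K) : MultiEnded K := by
  obtain ⟨H, _, ⟨_⟩⟩ := hK
  have : Infinite H := by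
    by_contra hfin
    rw [not_infinite_iff_finite] at hfin
    exact not_finite_iff_infinite.2 ‹_› (Finite.of_subgroup_quotient H)
  exact MultiEnded.of_finiteIndex (H := H) multiEnded_of_isFreeGroup

theorem VirtuallyFree.subgroup (hK : VirtuallyFree K) (M : Subgroup K) : VirtuallyFree M := by
  obtain ⟨H, _, ⟨_⟩⟩ := hK
  refine ⟨H.subgroupOf M, inferInstance, ⟨?_⟩⟩
  have hinj : Function.Injective (M.subtype.subgroupComap H) := fun x y hxy =>
    Subtype.ext (Subtype.ext (congrArg (fun z : H => (z : K)) hxy))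
  exact IsFreeGroup.ofMulEquiv (MonoidHom.ofInjective hinj).symm

theorem VirtuallyFree.finite_closure (hK : VirtuallyFree K) {B : Set K} (hBfin : B.Finite)
    (hB : ∀ a ∈ B, ∀ b ∈ B, IsOfFinOrder (a * b)) : (Subgroup.closure B : Set K).Finite := by
  by_contra hinf
  have : Infinite (Subgroup.closure B) := Set.infinite_coe_iff.2 hinf
  obtain ⟨a, ha, b, hb, hab⟩ := (hK.subgroup (Subgroup.closure B)).multiEnded
    |>.exists_not_isOfFinOrder_mul (hBfin.preimage Subtype.val_injective.injOn)
      (Subgroup.closure_closure_coe_preimage (k := B))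
  exact hab ((Submonoid.isOfFinOrder_coe (H := (Subgroup.closure B).toSubmonoid)).1
    (hB a ha b hb))

theorem isOfFinOrder_mul_comm {x y : K} (h : IsOfFinOrder (x * y)) : IsOfFinOrder (y * x) := by
  have hconj : IsOfFinOrder (MulAut.conj y (x * y)) :=
    (MulAut.conj y).toMonoidHom.isOfFinOrder h
  simpa [mul_assoc] using hconj

theorem isOfFinOrder_of_mem_of_finite {A : Subgroup K} (hA : (A : Set K).Finite) {a : K}
    (ha : a ∈ A) : IsOfFinOrder a := by
  have : Finite A := hA
  exact (Submonoid.isOfFinOrder_coe (H := A.toSubmonoid) (x := ⟨a, ha⟩)).2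
    (isOfFinOrder_of_finite (⟨a, ha⟩ : A))

theorem VirtuallyFree.finite_closure_insert (hK : VirtuallyFree K) {A : Subgroup K}
    (hA : (A : Set K).Finite) {g : K} (hg : IsOfFinOrder g)
    (hgA : ∀ a ∈ A, IsOfFinOrder (g * a)) :
    (Subgroup.closure (insert g (A : Set K)) : Set K).Finite := by
  refine hK.finite_closure (hA.insert g) ?_
  rintro a (rfl | ha) b (rfl | hb)
  · exact pow_two b ▸ hg.pow
  · exact hgA b hb
  · exact isOfFinOrder_mul_comm (hgA a ha)
  · exact isOfFinOrder_of_mem_of_finite hA (A.mul_mem ha hb)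

end VirtuallyFree

theorem maximal_finite_subgroup_iff_general
    (G : Type*) [Group G] (hvf : VirtuallyFree G) (A : Subgroup G) (hA : (A : Set G).Finite) :
    (∀ B : Subgroup G, (B : Set G).Finite → A ≤ B → A = B) ↔
      (∀ g : G, g ∉ A → IsOfFinOrder g → ∃ a ∈ A, ¬ IsOfFinOrder (g * a)) := by
  constructor
  · intro hmax g hgA hg
    by_contra! hfin
    have hclosure := hvf.finite_closure_insert hA hg hfin
    have hle : A ≤ Subgroup.closure (insert g A) :=
      (Set.subset_insert g _).trans Subgroup.subset_closure
    have hmem : g ∈ Subgroup.closure (insert g (A : Set G)) :=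
      Subgroup.subset_closure (Set.mem_insert g _)
    exact hgA (hmax _ hclosure hle ▸ hmem)
  · intro h B hB hAB
    refine hAB.antisymm fun g hgB => ?_
    by_contra hgA
    obtain ⟨a, ha, hga⟩ := h g hgA (isOfFinOrder_of_mem_of_finite hB hgB)
    exact hga (isOfFinOrder_of_mem_of_finite hB (B.mul_mem hgB (hAB ha)))

/-- Characterization of maximal finite subgroups of a finitely generated
virtually free group. -/
theorem maximal_finite_subgroup_iff
    (G : Type*) [Group G] (hfg : Group.FG G) (hvf : VirtuallyFree G)
    (A : Subgroup G) (hA : (A : Set G).Finite) :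
    (∀ B : Subgroup G, (B : Set G).Finite → A ≤ B → A = B) ↔
      (∀ g : G, g ∉ A → IsOfFinOrder g → ∃ a ∈ A, ¬ IsOfFinOrder (g * a)) :=
  maximal_finite_subgroup_iff_general G hvf A hA
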